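/- Let M be a compact metric space with a finite good covering 𝒰 = {U_1,…,U_N}, with chosen centers p_j ∈ U_j, and let (ξ_j)_{j=1}^N be the associated Lipschitz partition of unity. Then the map Θ : M → |𝒩_𝒰| defined by Θ(x) = (ξ_1(x), …, ξ_N(x)) is a Lipschitz homotopy equivalence. -/

import Mathlib

open Metric Set

/-- Two maps between metric spaces are *Lipschitz homotopic* if there is a Lipschitz map
`H : X × [0,1] → Y` with `H(·,0) = f` and `H(·,1) = g`. -/
def LipHomotopic {X Y : Type*} [MetricSpace X] [MetricSpace Y] (f g : X → Y) : Prop :=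
  ∃ (H : X × unitInterval → Y) (K : NNReal), LipschitzWith K H ∧
    (∀ x, H (x, 0) = f x) ∧ (∀ x, H (x, 1) = g x)

/-- Two metric spaces are *Lipschitz homotopy equivalent* if there are Lipschitz maps
`f : X → Y` and `g : Y → X` with `g ∘ f` and `f ∘ g` Lipschitz homotopic to identities. -/
def LipHomotopyEquiv (X Y : Type*) [MetricSpace X] [MetricSpace Y] : Prop :=
  ∃ (f : X → Y) (g : Y → X) (Kf Kg : NNReal),
    LipschitzWith Kf f ∧ LipschitzWith Kg g ∧
      LipHomotopic (g ∘ f) id ∧ LipHomotopic (f ∘ g) id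

/-- A subset `V` of a metric space admits a *Lipschitz strong deformation retraction to a
point* `p ∈ V` if there is a Lipschitz `F : V × [0,1] → V` with `F(x,0) = x`, `F(x,1) = p`
and `F(p,t) = p` for all `t`. -/
def IsLipSDRToPoint {X : Type*} [MetricSpace X] (V : Set X) : Prop :=
  ∃ (p : V) (F : V × unitInterval → V) (K : NNReal),
    LipschitzWith K F ∧ (∀ x, F (x, 0) = x) ∧ (∀ x, F (x, 1) = p) ∧ (∀ t, F (p, t) = p)

/-- A locally finite open covering is *good* if closures of its elements are compact and
every nonempty intersection of finitely many elements admits a Lipschitz strong deformation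
retraction to a point. -/
def IsGoodCovering {X : Type*} [MetricSpace X] {J : Type*} (U : J → Set X) : Prop :=
  (∀ j, IsOpen (U j)) ∧ (⋃ j, U j) = univ ∧ LocallyFinite U ∧
    (∀ j, IsCompact (closure (U j))) ∧
    ∀ s : Finset J, s.Nonempty → (⋂ j ∈ s, U j).Nonempty → IsLipSDRToPoint (⋂ j ∈ s, U j)

/-- The geometric realization of the nerve of a finite covering `U : Fin N → Set M`:
the set of `θ : Fin N → ℝ` with values in `[0,1]`, total sum `1`, whose support spans a
simplex of the nerve (i.e. the corresponding intersection is nonempty).  It carries the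
sup metric, induced from the product metric on `Fin N → ℝ`. -/
def NerveSet {M : Type*} [MetricSpace M] {N : ℕ} (U : Fin N → Set M) : Set (Fin N → ℝ) :=
  {θ | (∀ j, θ j ∈ Icc (0:ℝ) 1) ∧ ∑ j, θ j = 1 ∧ (⋂ j ∈ {j | θ j ≠ 0}, U j).Nonempty}

/-- `q` is a *center* of `V`: it belongs to `V` and `V` admits a Lipschitz strong
deformation retraction to `q`. -/
def IsCenter {X : Type*} [MetricSpace X] (V : Set X) (q : X) : Prop :=
  ∃ p : V, (p : X) = q ∧ ∃ (F : V × unitInterval → V) (K : NNReal),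
    LipschitzWith K F ∧ (∀ x, F (x, 0) = x) ∧ (∀ x, F (x, 1) = p) ∧ (∀ t, F (p, t) = p)

/-- A total map extending a Lipschitz contraction of `V` by the identity. -/
structure ConFlow {M : Type*} [MetricSpace M] (V : Set M) where
  G : M → unitInterval → M
  C : ℝ
  C_nonneg : 0 ≤ C
  q : M
  zero : ∀ x, G x 0 = x
  mem : ∀ x t, x ∈ V → G x t ∈ V
  one : ∀ x, x ∈ V → G x 1 = q
  lip : ∀ x y t s, (t ≠ 0 → x ∈ V) → (s ≠ 0 → y ∈ V) →
    dist (G x t) (G y s) ≤ C * (dist x y + dist t s)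

theorem exists_flow {M : Type*} [MetricSpace M] [Nonempty M] (V : Set M)
    (h : V.Nonempty → IsLipSDRToPoint V) : Nonempty (ConFlow V) := by
  classical
  by_cases hV : V.Nonempty
  · obtain ⟨q, F, K, hF, h0, h1, -⟩ := h hV
    have key : ∀ (x y : M) (hx : x ∈ V) (hy : y ∈ V) (t s : unitInterval),
        dist (F (⟨x, hx⟩, t) : M) (F (⟨y, hy⟩, s) : M) ≤ K * (dist x y + dist t s) := by
      intro x y hx hy t s
      have := hF.dist_le_mul (⟨x, hx⟩, t) (⟨y, hy⟩, s)
      refine this.trans ?_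
      refine mul_le_mul_of_nonneg_left ?_ K.2
      rw [Prod.dist_eq]
      exact max_le_add_of_nonneg dist_nonneg dist_nonneg
    have key2 : ∀ (x y : M) (hx : x ∈ V) (t : unitInterval),
        dist (F (⟨x, hx⟩, t) : M) y ≤ (K + 1) * (dist x y + dist t 0) := by
      intro x y hx t
      have h2 := key x x hx hx t 0
      rw [h0] at h2
      have h3 := dist_triangle (F (⟨x, hx⟩, t) : M) x y
      have h4 : 0 ≤ (K : ℝ) * dist x y := mul_nonneg K.2 dist_nonneg
      have h5 : 0 ≤ dist t 0 := dist_nonneg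
      simp only [dist_self] at h2
      nlinarith
    refine ⟨⟨fun x t => if hx : x ∈ V then F (⟨x, hx⟩, t) else x, K + 1, by positivity, q,
      ?_, ?_, ?_, ?_⟩⟩
    · intro x
      by_cases hx : x ∈ V <;> simp [hx, h0]
    · intro x t hx
      simp [hx]
    · intro x hx
      simp [hx, h1]
    · intro x y t s hx hy
      by_cases hx' : x ∈ V <;> by_cases hy' : y ∈ V
      · simp only [hx', hy', dif_pos]
        refine (key x y hx' hy' t s).trans ?_
        have : 0 ≤ dist x y + dist t s := by positivity
        nlinarith
      · have : s = 0 := by by_contra hh; exact hy' (hy hh)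
        subst this
        simp only [hx', hy', dif_pos]
        exact key2 x y hx' t
      · have : t = 0 := by by_contra hh; exact hx' (hx hh)
        subst this
        simp only [hx', hy', dif_pos]
        simp only [dif_neg, not_false_eq_true]
        rw [dist_comm, dist_comm x y, dist_comm 0 s]
        exact key2 y x hy' s
      · simp only [hx', hy', dif_neg, not_false_eq_true]
        have h1 : 0 ≤ (K : ℝ) * (dist x y + dist t s) := by positivity
        have h2 : 0 ≤ dist t s := dist_nonneg
        nlinarith
  · have hV' : ∀ x, x ∉ V := fun x hx => hV ⟨x, hx⟩
    refine ⟨⟨fun x _ => x, 1, zero_le_one, Classical.arbitrary M, fun _ => rfl,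
      fun x _ hx => hx, fun x hx => (hV' x hx).elim, ?_⟩⟩
    intro x y t s _ _
    have h2 : 0 ≤ dist t s := dist_nonneg
    show dist x y ≤ _
    linarith

section Run
variable {M S : Type*} [MetricSpace M] {V : S → Set M}

def runFlow (Φ : ∀ σ, ConFlow (V σ)) : List S → (S → unitInterval) → M → M
  | [], _, x => x
  | σ :: l, τ, x => runFlow Φ l τ ((Φ σ).G x (τ σ))

def GoodPt (V : S → Set M) (l : List S) (τ : S → unitInterval) (x : M) : Prop :=
  ∀ σ ∈ l, τ σ ≠ 0 → x ∈ V σ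

def Adm (V : S → Set M) (l : List S) (τ : S → unitInterval) : Prop :=
  l.Pairwise (fun σ σ' => τ σ ≠ 0 → τ σ' ≠ 0 → V σ ⊆ V σ')

theorem GoodPt.step (Φ : ∀ σ, ConFlow (V σ)) {σ : S} {l : List S} {τ : S → unitInterval} {x : M}
    (ha : Adm V (σ :: l) τ) (hg : GoodPt V (σ :: l) τ x) :
    GoodPt V l τ ((Φ σ).G x (τ σ)) := by
  intro σ' hσ' ht'
  by_cases h : τ σ = 0
  · rw [h, (Φ σ).zero]
    exact hg σ' (List.mem_cons_of_mem _ hσ') ht'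
  · exact (List.pairwise_cons.1 ha).1 σ' hσ' h ht' ((Φ σ).mem _ _ (hg σ (by simp) h))

theorem run_lip (Φ : ∀ σ, ConFlow (V σ)) (l : List S) : ∃ K : ℝ, 0 ≤ K ∧
    ∀ (τ τ' : S → unitInterval) (x x' : M) (D : ℝ), 0 ≤ D → Adm V l τ → Adm V l τ' →
      GoodPt V l τ x → GoodPt V l τ' x' → (∀ σ, dist (τ σ) (τ' σ) ≤ D) →
      dist (runFlow Φ l τ x) (runFlow Φ l τ' x') ≤ K * (dist x x' + D) := by
  induction l with
  | nil =>
    refine ⟨1, zero_le_one, ?_⟩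
    intro τ τ' x x' D hD _ _ _ _ _
    simp only [runFlow]
    linarith
  | cons σ l ih =>
    obtain ⟨K, hK, h⟩ := ih
    refine ⟨K * ((Φ σ).C + 1), mul_nonneg hK (by linarith [(Φ σ).C_nonneg]), ?_⟩
    intro τ τ' x x' D hD ha ha' hg hg' hd
    simp only [runFlow]
    refine (h τ τ' _ _ D hD (List.pairwise_cons.1 ha).2 (List.pairwise_cons.1 ha').2
      (hg.step Φ ha) (hg'.step Φ ha') hd).trans ?_
    rw [mul_assoc]
    refine mul_le_mul_of_nonneg_left ?_ hK
    have h1 := (Φ σ).lip x x' (τ σ) (τ' σ) (hg σ (by simp)) (hg' σ (by simp))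
    have h2 : (Φ σ).C * (dist x x' + dist (τ σ) (τ' σ)) ≤ (Φ σ).C * (dist x x' + D) :=
      mul_le_mul_of_nonneg_left (by linarith [hd σ]) (Φ σ).C_nonneg
    have h3 : 0 ≤ dist x x' := dist_nonneg
    linarith

theorem run_reset (Φ : ∀ σ, ConFlow (V σ)) (l : List S) : ∃ K : ℝ, 0 ≤ K ∧
    ∀ (τ τ' : S → unitInterval) (x x' : M) (D : ℝ), 0 ≤ D → Adm V l τ → Adm V l τ' →
      GoodPt V l τ x → GoodPt V l τ' x' → (∀ σ, dist (τ σ) (τ' σ) ≤ D) →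
      (∃ σ ∈ l, τ σ = 1 ∧ τ' σ = 1) →
      dist (runFlow Φ l τ x) (runFlow Φ l τ' x') ≤ K * D := by
  induction l with
  | nil =>
    refine ⟨1, zero_le_one, ?_⟩
    rintro τ τ' x x' D hD _ _ _ _ _ ⟨σ, hσ, _⟩
    simp at hσ
  | cons σ l ih =>
    obtain ⟨K, hK, h⟩ := ih
    obtain ⟨K', hK', h'⟩ := run_lip Φ l
    refine ⟨K + K', by linarith, ?_⟩
    rintro τ τ' x x' D hD ha ha' hg hg' hd ⟨σ', hσ', h1, h1'⟩
    have e1 := mul_nonneg hK hD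
    have e2 := mul_nonneg hK' hD
    have ha2 := (List.pairwise_cons.1 ha).2
    have ha2' := (List.pairwise_cons.1 ha').2
    rcases List.mem_cons.1 hσ' with rfl | hmem
    · have := h' τ τ' _ _ D hD ha2 ha2' (hg.step Φ ha) (hg'.step Φ ha') hd
      have hx : x ∈ V σ' := hg σ' (by simp) (by simp [h1])
      have hx' : x' ∈ V σ' := hg' σ' (by simp) (by simp [h1'])
      rw [h1, h1', (Φ σ').one x hx, (Φ σ').one x' hx', dist_self, zero_add] at this
      simp only [runFlow]
      rw [h1, h1', (Φ σ').one x hx, (Φ σ').one x' hx']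
      linarith
    · have := h τ τ' _ _ D hD ha2 ha2' (hg.step Φ ha) (hg'.step Φ ha') hd ⟨σ', hmem, h1, h1'⟩
      simp only [runFlow]
      linarith

theorem run_mem (Φ : ∀ σ, ConFlow (V σ)) (W : Set M) (τ : S → unitInterval)
    (hW : ∀ σ, τ σ ≠ 0 → V σ ⊆ W) (l : List S) : ∀ x, Adm V l τ → GoodPt V l τ x → x ∈ W →
      runFlow Φ l τ x ∈ W := by
  induction l with
  | nil => intro x _ _ hx; exact hx
  | cons σ l ih =>
    intro x ha hg hx
    refine ih _ (List.pairwise_cons.1 ha).2 (hg.step Φ ha) ?_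
    by_cases h : τ σ = 0
    · rwa [h, (Φ σ).zero]
    · exact hW σ h ((Φ σ).mem _ _ (hg σ (by simp) h))

theorem run_zero (Φ : ∀ σ, ConFlow (V σ)) (l : List S) (x : M) :
    runFlow Φ l (fun _ => 0) x = x := by
  induction l with
  | nil => rfl
  | cons σ l ih => simp only [runFlow]; rw [(Φ σ).zero]; exact ih

end Run

/-- Quotients of Lipschitz functions. -/
theorem lip_div {X : Type*} [PseudoMetricSpace X] {f g : X → ℝ} {A B : ℝ} {b c : ℝ}
    (hf : ∀ x y, |f x - f y| ≤ A * dist x y) (hg : ∀ x y, |g x - g y| ≤ B * dist x y)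
    (hb : ∀ x, |f x| ≤ b * g x) (hc : 0 < c) (hgc : ∀ x, c ≤ g x) (x y : X) :
    |f x / g x - f y / g y| ≤ ((A + b * B) / c) * dist x y := by
  have hx : 0 < g x := hc.trans_le (hgc x)
  have hy : 0 < g y := hc.trans_le (hgc y)
  have hb0 : 0 ≤ b := by
    by_contra h
    have := (abs_nonneg _).trans (hb x)
    nlinarith
  have e : f x / g x - f y / g y = ((f x - f y) - (f y / g y) * (g x - g y)) / g x := by
    field_simp
    try ring
  have hq : |f y / g y| ≤ b := by
    rw [abs_div, abs_of_pos hy, div_le_iff₀ hy]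
    exact hb y
  rw [e, abs_div, abs_of_pos hx, div_mul_eq_mul_div (A + b * B) c (dist x y)]
  have h1 : |(f x - f y) - (f y / g y) * (g x - g y)| ≤ (A + b * B) * dist x y := by
    refine (abs_sub _ _).trans ?_
    rw [abs_mul]
    have := mul_le_mul hq (hg x y) (abs_nonneg _) hb0
    linarith [hf x y]
  exact div_le_div₀ ((abs_nonneg _).trans h1) h1 hc (hgc x)

/-- A fat neighbourhood: `θ` has a gap between `σ` and its complement. -/
def gapSet {N : ℕ} (σ : Finset (Fin N)) (d : ℝ) : Set (Fin N → ℝ) :=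
  {θ | ∀ i ∈ σ, d ≤ θ i ∧ ∀ j, j ∉ σ → θ j + d ≤ θ i}

theorem gapSet_nonempty {N : ℕ} (σ : Finset (Fin N)) (d : ℝ) : (gapSet σ d).Nonempty := by
  classical
  refine ⟨fun i => if i ∈ σ then d else 0, ?_⟩
  intro i hi
  refine ⟨by simp [hi], ?_⟩
  intro j hj
  simp [hi, hj]

theorem gapSet_near {N : ℕ} {σ : Finset (Fin N)} {d r : ℝ} {θ η : Fin N → ℝ}
    (h : θ ∈ gapSet σ d) (hd : dist θ η ≤ r) : η ∈ gapSet σ (d - 2 * r) := by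
  have hr : 0 ≤ r := dist_nonneg.trans hd
  have hh : ∀ i, |θ i - η i| ≤ r := fun i => (dist_le_pi_dist θ η i).trans hd
  intro i hi
  have h1 := abs_le.1 (hh i)
  refine ⟨by linarith [(h i hi).1], ?_⟩
  intro j hj
  have h2 := abs_le.1 (hh j)
  linarith [(h i hi).2 j hj]

theorem exists_gap {N : ℕ} (θ : Fin N → ℝ) (h0 : ∀ i, 0 ≤ θ i) (h1 : ∑ i, θ i = 1) :
    ∃ σ : Finset (Fin N), σ.Nonempty ∧ θ ∈ gapSet σ (1 / ((N : ℝ) + 1) ^ 2) := by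
  classical
  set d : ℝ := 1 / ((N : ℝ) + 1) ^ 2 with hd
  have hdpos : 0 < d := by positivity
  -- an index with a big value
  obtain ⟨m, hm⟩ : ∃ m, ((N : ℝ) + 1) * d ≤ θ m := by
    by_contra hcon
    push Not at hcon
    have : ∑ i, θ i ≤ ∑ _i : Fin N, ((N : ℝ) + 1) * d :=
      Finset.sum_le_sum fun i _ => (hcon i).le
    rw [h1] at this
    simp only [Finset.sum_const, Finset.card_univ, Fintype.card_fin, nsmul_eq_mul] at this
    have e : (N : ℝ) * (((N : ℝ) + 1) * d) = N / (N + 1) := by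
      rw [hd]; field_simp
    rw [e, le_div_iff₀ (by positivity)] at this
    linarith
  -- an empty window
  obtain ⟨k, hk⟩ : ∃ k : Fin (N + 1), ∀ j, ¬ (⌊θ j / d⌋₊ = (k : ℕ)) := by
    by_contra hcon
    push Not at hcon
    choose g hg using hcon
    have hinj : Function.Injective g := by
      intro a b hab
      apply Fin.ext
      rw [← hg a, ← hg b, hab]
    have := Fintype.card_le_of_injective g hinj
    simp at this
  have hkN : ((k : ℕ) : ℝ) ≤ N := by exact_mod_cast Nat.lt_succ_iff.1 k.2
  refine ⟨Finset.univ.filter (fun j => ((k : ℕ) : ℝ) * d + d ≤ θ j), ⟨m, ?_⟩, ?_⟩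
  · simp only [Finset.mem_filter, Finset.mem_univ, true_and]
    nlinarith
  · intro i hi
    simp only [Finset.mem_filter, Finset.mem_univ, true_and] at hi
    have hk0 : 0 ≤ ((k : ℕ) : ℝ) * d := by positivity
    refine ⟨by linarith, ?_⟩
    intro j hj
    simp only [Finset.mem_filter, Finset.mem_univ, true_and, not_le] at hj
    have : θ j < ((k : ℕ) : ℝ) * d := by
      by_contra hcon
      push Not at hcon
      apply hk j
      rw [Nat.floor_eq_iff (div_nonneg (h0 j) hdpos.le)]
      rw [le_div_iff₀ hdpos, div_lt_iff₀ hdpos]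
      constructor <;> linarith
    linarith

/-- The time functions. -/
noncomputable def tau {N : ℕ} (d : ℝ) (θ : Fin N → ℝ) (σ : {s : Finset (Fin N) // s.Nonempty}) :
    unitInterval :=
  projIcc 0 1 zero_le_one (1 - (8 / d) * infDist θ (gapSet σ.1 (d / 2)))

theorem tau_one {N : ℕ} {d : ℝ} {θ : Fin N → ℝ} {σ : {s : Finset (Fin N) // s.Nonempty}}
    (h : θ ∈ gapSet σ.1 (d / 2)) : tau d θ σ = 1 := by
  rw [tau, infDist_zero_of_mem h]
  simp

theorem tau_pos {N : ℕ} {d : ℝ} (hd : 0 < d) {θ : Fin N → ℝ}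
    {σ : {s : Finset (Fin N) // s.Nonempty}}
    (h : tau d θ σ ≠ 0) : θ ∈ gapSet σ.1 (d / 4) := by
  have h1 : infDist θ (gapSet σ.1 (d / 2)) < d / 8 := by
    by_contra hcon
    push Not at hcon
    apply h
    rw [tau]
    apply projIcc_of_le_left
    have : 8 / d * (d / 8) ≤ 8 / d * infDist θ (gapSet σ.1 (d / 2)) :=
      mul_le_mul_of_nonneg_left hcon (by positivity)
    have e : 8 / d * (d / 8) = 1 := by field_simp
    linarith
  obtain ⟨a, ha, hda⟩ := (infDist_lt_iff (gapSet_nonempty _ _)).1 h1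
  rw [dist_comm] at hda
  have := gapSet_near ha hda.le
  convert this using 1
  ring_nf

theorem tau_lip {N : ℕ} {d : ℝ} (hd : 0 < d) (θ η : Fin N → ℝ)
    (σ : {s : Finset (Fin N) // s.Nonempty}) :
    dist (tau d θ σ) (tau d η σ) ≤ (8 / d) * dist θ η := by
  have h1 := (LipschitzWith.projIcc (zero_le_one (α := ℝ))).dist_le_mul
    (1 - (8 / d) * infDist θ (gapSet σ.1 (d / 2))) (1 - (8 / d) * infDist η (gapSet σ.1 (d / 2)))
  refine h1.trans ?_
  have h2 := (lipschitz_infDist_pt (gapSet σ.1 (d / 2))).dist_le_mul θ η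
  rw [Real.dist_eq] at h2 ⊢
  simp only [NNReal.coe_one, one_mul] at h2 ⊢
  rw [show (1 - 8 / d * infDist θ (gapSet σ.1 (d / 2)) - (1 - 8 / d * infDist η (gapSet σ.1 (d / 2))))
    = - ((8 / d) * (infDist θ (gapSet σ.1 (d / 2)) - infDist η (gapSet σ.1 (d / 2)))) by ring,
    abs_neg, abs_mul, abs_of_pos (by positivity)]
  exact mul_le_mul_of_nonneg_left h2 (by positivity)

theorem exists_list (N : ℕ) : ∃ l : List {s : Finset (Fin N) // s.Nonempty},
    (∀ σ, σ ∈ l) ∧ l.Pairwise (fun a b => b.1.card ≤ a.1.card) := by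
  classical
  let r : {s : Finset (Fin N) // s.Nonempty} → {s : Finset (Fin N) // s.Nonempty} → Prop :=
    fun a b => b.1.card ≤ a.1.card
  have : Std.Total r := ⟨fun a b => le_total _ _⟩
  have : IsTrans _ r := ⟨fun a b c h1 h2 => le_trans h2 h1⟩
  refine ⟨(Finset.univ.toList).insertionSort r, ?_, ?_⟩
  · intro σ
    rw [List.mem_insertionSort]
    simp
  · exact List.pairwise_insertionSort r _

theorem gap_subset {N : ℕ} {d : ℝ} (hd : 0 < d) {θ : Fin N → ℝ} {s t : Finset (Fin N)}
    (hs : θ ∈ gapSet s d) (ht : θ ∈ gapSet t d) (hc : t.card ≤ s.card) : t ⊆ s := by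
  intro j hj
  by_contra hjs
  have : ¬ s ⊆ t := by
    intro hst
    exact hjs (Finset.eq_of_subset_of_card_le hst hc ▸ hj)
  obtain ⟨i, hi, hit⟩ := Finset.not_subset.1 this
  have h1 := (hs i hi).2 j hjs
  have h2 := (ht j hj).2 i hit
  linarith

theorem nerve_mk {M : Type*} [MetricSpace M] {N : ℕ} {U : Fin N → Set M} {θ : Fin N → ℝ}
    (h0 : ∀ j, 0 ≤ θ j) (h1 : ∑ j, θ j = 1) (x : M) (hx : ∀ j, θ j ≠ 0 → x ∈ U j) :
    θ ∈ NerveSet U := by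
  refine ⟨fun j => ⟨h0 j, ?_⟩, h1, ⟨x, ?_⟩⟩
  · rw [← h1]
    exact Finset.single_le_sum (fun i _ => h0 i) (Finset.mem_univ j)
  · simpa using hx

theorem theta_lip {M : Type*} [MetricSpace M] [CompactSpace M] [Nonempty M]
    {N : ℕ} (U : Fin N → Set M) (hU : ∀ j, IsOpen (U j))
    (p : Fin N → M) (hp : ∀ j, p j ∈ U j)
    (Θ : M → ↥(NerveSet U))
    (hΘ : ∀ (x : M) (j : Fin N), (Θ x : Fin N → ℝ) j =
      (infDist x (U j)ᶜ / (infDist x (U j)ᶜ + dist x (p j))) /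
        ∑ i, infDist x (U i)ᶜ / (infDist x (U i)ᶜ + dist x (p i))) :
    ∃ K : ℝ, 0 ≤ K ∧ ∀ x y, dist (Θ x) (Θ y) ≤ K * dist x y := by
  set f : Fin N → M → ℝ := fun j x => infDist x (U j)ᶜ / (infDist x (U j)ᶜ + dist x (p j)) with hf
  have hf0 : ∀ j x, 0 ≤ f j x := fun j x =>
    div_nonneg infDist_nonneg (add_nonneg infDist_nonneg dist_nonneg)
  have h1 : ∀ j, ∃ A : ℝ, 0 ≤ A ∧ ∀ x y, |f j x - f j y| ≤ A * dist x y := by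
    intro j
    by_cases hne : ((U j)ᶜ).Nonempty
    · have hr : 0 < infDist (p j) (U j)ᶜ :=
        ((hU j).isClosed_compl.notMem_iff_infDist_pos hne).1 (by simpa using hp j)
      have hl : ∀ x y, |infDist x (U j)ᶜ - infDist y (U j)ᶜ| ≤ 1 * dist x y := by
        intro x y
        have := (lipschitz_infDist_pt (U j)ᶜ).dist_le_mul x y
        simpa [Real.dist_eq] using this
      refine ⟨(1 + 1 * 2) / infDist (p j) (U j)ᶜ, by positivity, ?_⟩
      refine lip_div hl ?_ ?_ hr ?_
      · intro x y
        have h1 := hl x y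
        have h2 := abs_dist_sub_le x y (p j)
        calc _ = |(infDist x (U j)ᶜ - infDist y (U j)ᶜ) + (dist x (p j) - dist y (p j))| := by
              congr 1; ring
          _ ≤ _ := abs_add_le _ _
          _ ≤ _ := by linarith
      · intro x
        rw [abs_of_nonneg infDist_nonneg]
        linarith [dist_nonneg (x := x) (y := p j)]
      · intro x
        rw [dist_comm]
        exact infDist_le_infDist_add_dist
    · rw [not_nonempty_iff_eq_empty] at hne
      refine ⟨0, le_rfl, ?_⟩
      intro x y
      simp [hf, hne]
  choose A hA0 hA using h1
  have hS : ∀ x y, |(∑ i, f i x) - ∑ i, f i y| ≤ (∑ i, A i) * dist x y := by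
    intro x y
    rw [← Finset.sum_sub_distrib, Finset.sum_mul]
    exact (Finset.abs_sum_le_sum_abs _ _).trans (Finset.sum_le_sum fun i _ => hA i x y)
  have hScont : Continuous (fun x => ∑ i, f i x) :=
    (LipschitzWith.of_dist_le' (K := ∑ i, A i) fun x y => by
      rw [Real.dist_eq]; exact hS x y).continuous
  have hSpos : ∀ x, 0 < ∑ i, f i x := by
    intro x
    refine lt_of_le_of_ne (Finset.sum_nonneg fun i _ => hf0 i x) ?_
    intro h
    have h2 := (Θ x).2.2.1
    have : ∀ j, (Θ x : Fin N → ℝ) j = 0 := by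
      intro j
      rw [hΘ]
      change _ / (∑ i, f i x) = 0
      rw [← h, div_zero]
    simp [this] at h2
  obtain ⟨x0, -, hx0⟩ := isCompact_univ.exists_isMinOn (univ_nonempty (α := M)) hScont.continuousOn
  have hmin : ∀ x, ∑ i, f i x0 ≤ ∑ i, f i x := fun x => hx0 (mem_univ x)
  have hSA : 0 ≤ ∑ i, A i := Finset.sum_nonneg fun i _ => hA0 i
  refine ⟨(∑ i, A i + 1 * ∑ i, A i) / (∑ i, f i x0),
    div_nonneg (by linarith) (hSpos x0).le, ?_⟩
  intro x y
  rw [Subtype.dist_eq, dist_pi_le_iff (mul_nonneg (div_nonneg (by linarith) (hSpos x0).le) dist_nonneg)]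
  intro j
  rw [hΘ, hΘ, Real.dist_eq]
  refine lip_div (f := f j) (g := fun x => ∑ i, f i x) ?_ hS ?_ (hSpos x0) hmin x y
  · intro x y
    refine (hA j x y).trans (mul_le_mul_of_nonneg_right ?_ dist_nonneg)
    exact Finset.single_le_sum (fun i _ => hA0 i) (Finset.mem_univ j)
  · intro x
    rw [abs_of_nonneg (hf0 j x), one_mul]
    exact Finset.single_le_sum (f := fun i => f i x) (fun i _ => hf0 i x) (Finset.mem_univ j)

theorem exists_psi {M : Type*} [MetricSpace M] {N : ℕ} (U : Fin N → Set M) {ε : ℝ} (hε : 0 < ε) :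
    ∃ (ψ : NerveSet U → Fin N → ℝ) (K : ℝ), 0 ≤ K ∧ (∀ θ j, 0 ≤ ψ θ j) ∧
      (∀ θ, ∑ j, ψ θ j = 1) ∧ (∀ θ η j, |ψ θ j - ψ η j| ≤ K * dist θ η) ∧
      ∀ θ j, ψ θ j ≠ 0 → ∀ i, θ.1 i < θ.1 j + ε := by
  set f : Fin N → NerveSet U → ℝ := fun j θ => max 0 (θ.1 j - ‖θ.1‖ + ε) with hf
  have hf0 : ∀ j θ, 0 ≤ f j θ := fun j θ => le_max_left _ _
  have hl : ∀ j (θ η : NerveSet U), |f j θ - f j η| ≤ 2 * dist θ η := by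
    intro j θ η
    refine (abs_max_sub_max_le_max _ _ _ _).trans ?_
    rw [sub_self, abs_zero, max_eq_right (abs_nonneg _)]
    have h1 : |θ.1 j - η.1 j| ≤ dist θ η := dist_le_pi_dist θ.1 η.1 j
    have h2 : |‖θ.1‖ - ‖η.1‖| ≤ dist θ η := by
      rw [Subtype.dist_eq, dist_eq_norm]; exact abs_norm_sub_norm_le _ _
    rw [abs_le] at *
    constructor <;> linarith [h1.1, h1.2, h2.1, h2.2]
  have hS : ∀ θ η, |(∑ i, f i θ) - ∑ i, f i η| ≤ (N * 2) * dist θ η := by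
    intro x y
    rw [← Finset.sum_sub_distrib]
    refine (Finset.abs_sum_le_sum_abs _ _).trans
      ((Finset.sum_le_sum fun i _ => hl i x y).trans (le_of_eq ?_))
    simp; ring
  have hSε : ∀ θ, ε ≤ ∑ i, f i θ := by
    intro θ
    have hne : Nonempty (Fin N) := by
      by_contra hcon
      rw [not_nonempty_iff] at hcon
      have := θ.2.2.1
      simp at this
    obtain ⟨j, hj⟩ := Finite.exists_max θ.1
    have hn : ‖θ.1‖ ≤ θ.1 j := by
      rw [pi_norm_le_iff_of_nonneg ((θ.2.1 j).1)]
      intro i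
      rw [Real.norm_eq_abs, abs_of_nonneg (θ.2.1 i).1]
      exact hj i
    calc ε ≤ f j θ := by
          refine le_trans ?_ (le_max_right _ _)
          linarith
      _ ≤ _ := Finset.single_le_sum (f := fun i => f i θ) (fun i _ => hf0 i θ) (Finset.mem_univ j)
  have hSpos : ∀ θ, 0 < ∑ i, f i θ := fun θ => hε.trans_le (hSε θ)
  refine ⟨fun θ j => f j θ / ∑ i, f i θ, (2 + 1 * (N * 2)) / ε, by positivity, ?_, ?_, ?_, ?_⟩
  · intro θ j
    exact div_nonneg (hf0 j θ) (hSpos θ).le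
  · intro θ
    rw [← Finset.sum_div]
    exact div_self (hSpos θ).ne'
  · intro θ η j
    refine lip_div (f := f j) (g := fun x => ∑ i, f i x) (hl j) hS ?_ hε hSε θ η
    intro x
    rw [abs_of_nonneg (hf0 j x), one_mul]
    exact Finset.single_le_sum (f := fun i => f i x) (fun i _ => hf0 i x) (Finset.mem_univ j)
  · intro θ j hj i
    have h1 : f j θ ≠ 0 := by
      intro h
      apply hj
      simp only [h, zero_div]
    have h2 : 0 < θ.1 j - ‖θ.1‖ + ε := by
      by_contra hcon
      push Not at hcon
      exact h1 (max_eq_left hcon)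
    have h3 : θ.1 i ≤ ‖θ.1‖ := (le_abs_self _).trans (norm_le_pi_norm θ.1 i)
    linarith

theorem mul_lip {a a' u u' A B : ℝ} (ha : |a - a'| ≤ A) (hu : |u - u'| ≤ B)
    (h1 : |a'| ≤ 1) (h2 : |u| ≤ 1) : |a * u - a' * u'| ≤ A + B := by
  have e : a * u - a' * u' = (a - a') * u + a' * (u - u') := by ring
  rw [e]
  refine (abs_add_le _ _).trans ?_
  rw [abs_mul, abs_mul]
  have := mul_le_mul ha h2 (abs_nonneg _) ((abs_nonneg _).trans ha)
  have := mul_le_mul h1 hu (abs_nonneg _) zero_le_one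
  linarith

/-- Homotopy through an intermediate point. -/
theorem two_step {M : Type*} [MetricSpace M] {N : ℕ} (U : Fin N → Set M)
    (g : NerveSet U → NerveSet U) {L K : ℝ} (hL : 0 ≤ L) (hK : 0 ≤ K)
    (hg : ∀ θ η, dist (g θ) (g η) ≤ L * dist θ η)
    (ψ : NerveSet U → Fin N → ℝ) (h0 : ∀ θ j, 0 ≤ ψ θ j) (h1 : ∀ θ, ∑ j, ψ θ j = 1)
    (hψ : ∀ θ η j, |ψ θ j - ψ η j| ≤ K * dist θ η)
    (hs : ∀ θ j, ψ θ j ≠ 0 → θ.1 j ≠ 0)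
    (hx : ∀ θ, ∃ x, (∀ j, ψ θ j ≠ 0 → x ∈ U j) ∧ ∀ j, (g θ).1 j ≠ 0 → x ∈ U j) :
    LipHomotopic g id := by
  -- weights, with `s = 0` giving `g` and `s = 1` giving the identity
  set a : unitInterval → ℝ := fun s => max 0 (1 - 2 * s.1) with ha
  set c : unitInterval → ℝ := fun s => max 0 (2 * s.1 - 1) with hc
  have ha0 : ∀ s, 0 ≤ a s := fun s => le_max_left _ _
  have hc0 : ∀ s, 0 ≤ c s := fun s => le_max_left _ _
  have hcase : ∀ s, (a s = 0 ∧ c s ≤ 1) ∨ (c s = 0 ∧ a s ≤ 1) := by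
    intro s
    rcases le_total (2 * s.1) 1 with h | h
    · right
      exact ⟨max_eq_left (by linarith), max_le zero_le_one (by linarith [s.2.1])⟩
    · left
      exact ⟨max_eq_left (by linarith), max_le zero_le_one (by linarith [s.2.2])⟩
  have hac : ∀ s, a s + c s ≤ 1 := by
    intro s
    rcases hcase s with ⟨h, h'⟩ | ⟨h, h'⟩ <;> rw [h] <;> linarith
  have hla : ∀ s t, |a s - a t| ≤ 2 * dist s t := by
    intro s t
    refine (abs_max_sub_max_le_max _ _ _ _).trans ?_
    rw [sub_self, abs_zero, max_eq_right (abs_nonneg _), Subtype.dist_eq, Real.dist_eq,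
      show (1 - 2 * s.1 - (1 - 2 * t.1)) = (-2) * (s.1 - t.1) by ring, abs_mul]
    norm_num
  have hlc : ∀ s t, |c s - c t| ≤ 2 * dist s t := by
    intro s t
    refine (abs_max_sub_max_le_max _ _ _ _).trans ?_
    rw [sub_self, abs_zero, max_eq_right (abs_nonneg _), Subtype.dist_eq, Real.dist_eq,
      show (2 * s.1 - 1 - (2 * t.1 - 1)) = 2 * (s.1 - t.1) by ring, abs_mul]
    norm_num
  let v : NerveSet U → unitInterval → Fin N → ℝ := fun θ s j =>
    a s * (g θ).1 j + (1 - a s - c s) * ψ θ j + c s * θ.1 j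
  have hmem : ∀ θ s, v θ s ∈ NerveSet U := by
    intro θ s
    have hnn : ∀ j, 0 ≤ v θ s j := by
      intro j
      have e1 := mul_nonneg (ha0 s) ((g θ).2.1 j).1
      have e2 := mul_nonneg (show 0 ≤ 1 - a s - c s by linarith [hac s]) (h0 θ j)
      have e3 := mul_nonneg (hc0 s) (θ.2.1 j).1
      show 0 ≤ _ + _ + _
      linarith
    have hsum : ∑ j, v θ s j = 1 := by
      show ∑ j, (a s * (g θ).1 j + (1 - a s - c s) * ψ θ j + c s * θ.1 j) = 1
      rw [Finset.sum_add_distrib, Finset.sum_add_distrib, ← Finset.mul_sum, ← Finset.mul_sum,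
        ← Finset.mul_sum, h1, (g θ).2.2.1, θ.2.2.1]
      ring
    rcases hcase s with ⟨h, -⟩ | ⟨h, -⟩
    · obtain ⟨x, hxx⟩ := θ.2.2.2
      simp only [mem_ofPred_eq, mem_iInter] at hxx
      refine nerve_mk hnn hsum x ?_
      intro j hj
      apply hxx
      intro hz
      apply hj
      have : ψ θ j = 0 := by
        by_contra hcon
        exact hs θ j hcon hz
      simp only [v, h, hz, this]
      ring
    · obtain ⟨x, hx1, hx2⟩ := hx θ
      refine nerve_mk hnn hsum x ?_
      intro j hj
      by_contra hcon
      have e1 : ψ θ j = 0 := by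
        by_contra hh
        exact hcon (hx1 j hh)
      have e2 : (g θ).1 j = 0 := by
        by_contra hh
        exact hcon (hx2 j hh)
      apply hj
      simp only [v, h, e1, e2]
      ring
  refine ⟨fun q => ⟨v q.1 q.2, hmem q.1 q.2⟩, _,
    LipschitzWith.of_dist_le' (K := 8 + L + K + 1) ?_, ?_, ?_⟩
  · rintro ⟨θ, s⟩ ⟨η, t⟩
    have hnonneg : 0 ≤ (8 + L + K + 1) * dist (θ, s) (η, t) :=
      mul_nonneg (by linarith) dist_nonneg
    rw [Subtype.dist_eq, dist_pi_le_iff hnonneg]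
    intro j
    rw [Real.dist_eq]
    have d1 : dist θ η ≤ dist (θ, s) (η, t) := le_max_left _ _
    have d2 : dist s t ≤ dist (θ, s) (η, t) := le_max_right _ _
    have hψ1 : ψ θ j ≤ 1 := by
      rw [← h1 θ]
      exact Finset.single_le_sum (fun i _ => h0 θ i) (Finset.mem_univ j)
    have g1 : |(g θ).1 j - (g η).1 j| ≤ L * dist θ η :=
      (dist_le_pi_dist (g θ).1 (g η).1 j).trans (hg θ η)
    have g2 : |θ.1 j - η.1 j| ≤ dist θ η := dist_le_pi_dist θ.1 η.1 j
    have m1 := mul_lip (hla s t) g1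
      (by rw [abs_of_nonneg (ha0 t)]; linarith [hac t, hc0 t])
      (by rw [abs_of_nonneg ((g θ).2.1 j).1]; exact ((g θ).2.1 j).2)
    have m2 := mul_lip (hlc s t) g2
      (by rw [abs_of_nonneg (hc0 t)]; linarith [hac t, ha0 t])
      (by rw [abs_of_nonneg (θ.2.1 j).1]; exact (θ.2.1 j).2)
    have hb : |(1 - a s - c s) - (1 - a t - c t)| ≤ 4 * dist s t := by
      have e1 := abs_le.1 (hla s t)
      have e2 := abs_le.1 (hlc s t)
      rw [abs_le]
      constructor <;> linarith [e1.1, e1.2, e2.1, e2.2]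
    have m3 := mul_lip hb (hψ θ η j)
      (by rw [abs_of_nonneg (by linarith [hac t])]; linarith [hc0 t, ha0 t])
      (by rw [abs_of_nonneg (h0 θ j)]; exact hψ1)
    have n1 : L * dist θ η ≤ L * dist (θ, s) (η, t) := mul_le_mul_of_nonneg_left d1 hL
    have n2 : K * dist θ η ≤ K * dist (θ, s) (η, t) := mul_le_mul_of_nonneg_left d1 hK
    show |(a s * (g θ).1 j + (1 - a s - c s) * ψ θ j + c s * θ.1 j) -
      (a t * (g η).1 j + (1 - a t - c t) * ψ η j + c t * η.1 j)| ≤ _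
    rw [abs_le] at m1 m2 m3 ⊢
    constructor <;> linarith [m1.1, m1.2, m2.1, m2.2, m3.1, m3.2]
  · intro θ
    ext j
    simp [v, ha, hc]
  · intro θ
    ext j
    simp [v, ha, hc]
    norm_num

/-- Let `M` be a compact metric space with a finite good covering
`U_1, …, U_N` with chosen centers `p_j`, and let `ξ_j` be the associated Lipschitz
partition of unity, `ξ_j(x) = f_j(x)/Σ_i f_i(x)` with
`f_j(x) = d(x, M∖U_j)/(d(x, M∖U_j) + d(x,p_j))`.  Then
`Θ : M → |𝒩_𝒰|`, `Θ(x) = (ξ_1(x),…,ξ_N(x))`, is a Lipschitz homotopy equivalence. -/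
theorem theta_lipHomotopyEquiv {M : Type*} [MetricSpace M] [CompactSpace M]
    {N : ℕ} (U : Fin N → Set M) (hU : IsGoodCovering U)
    (p : Fin N → M) (hp : ∀ j, IsCenter (U j) (p j))
    (Θ : M → ↥(NerveSet U))
    (hΘ : ∀ (x : M) (j : Fin N), (Θ x : Fin N → ℝ) j =
      (infDist x (U j)ᶜ / (infDist x (U j)ᶜ + dist x (p j))) /
        ∑ i, infDist x (U i)ᶜ / (infDist x (U i)ᶜ + dist x (p i))) :
    (∃ K : NNReal, LipschitzWith K Θ) ∧
    ∃ (ζ : ↥(NerveSet U) → M) (Kζ : NNReal), LipschitzWith Kζ ζ ∧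
      LipHomotopic (ζ ∘ Θ) id ∧ LipHomotopic (Θ ∘ ζ) id := by

  classical
  obtain ⟨hopen, -, -, -, hgood⟩ := hU
  rcases isEmpty_or_nonempty M with hM | hM
  · have hN : IsEmpty (NerveSet U) := ⟨fun θ => by
      obtain ⟨x, -⟩ := θ.2.2.2
      exact hM.false x⟩
    refine ⟨⟨0, fun x => hM.elim x⟩, fun θ => hN.elim θ, 0, fun θ => hN.elim θ, ?_, ?_⟩
    · exact ⟨fun q => q.1, 0, fun q => hM.elim q.1, fun x => hM.elim x, fun x => hM.elim x⟩
    · exact ⟨fun q => q.1, 0, fun q => hN.elim q.1, fun x => hN.elim x, fun x => hN.elim x⟩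
  have hpU : ∀ j, p j ∈ U j := by
    intro j
    obtain ⟨q, hq, -⟩ := hp j
    exact hq ▸ q.2
  obtain ⟨L, hL0, hL⟩ := theta_lip U hopen p hpU Θ hΘ
  have hΘU : ∀ x j, (Θ x).1 j ≠ 0 → x ∈ U j := by
    intro x j h
    by_contra hx
    apply h
    rw [hΘ, infDist_zero_of_mem (show x ∈ (U j)ᶜ from hx)]
    simp
  let V : {s : Finset (Fin N) // s.Nonempty} → Set M := fun σ => ⋂ j ∈ σ.1, U j
  have hflow : ∀ σ, Nonempty (ConFlow (V σ)) := fun σ =>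
    exists_flow (V σ) (fun h => hgood σ.1 σ.2 h)
  let Φ : ∀ σ, ConFlow (V σ) := fun σ => Classical.choice (hflow σ)
  obtain ⟨l, hl, hlp⟩ := exists_list N
  set d : ℝ := 1 / ((N : ℝ) + 1) ^ 2 with hd
  have hdpos : 0 < d := by positivity
  let τ : NerveSet U → {s : Finset (Fin N) // s.Nonempty} → unitInterval := fun θ => tau d θ.1
  have hsub : ∀ (θ : NerveSet U) (σ σ' : {s : Finset (Fin N) // s.Nonempty}),
      σ'.1.card ≤ σ.1.card → τ θ σ ≠ 0 → τ θ σ' ≠ 0 → V σ ⊆ V σ' := by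
    intro θ σ σ' hc h h'
    have := gap_subset (by positivity) (tau_pos hdpos h) (tau_pos hdpos h') hc
    exact biInter_subset_biInter_left this
  have hadm : ∀ (θ : NerveSet U) (τ' : {s : Finset (Fin N) // s.Nonempty} → unitInterval),
      (∀ σ, τ' σ ≠ 0 → τ θ σ ≠ 0) → Adm V l τ' := by
    intro θ τ' hτ'
    exact hlp.imp fun {σ σ'} hc h h' => hsub θ σ σ' hc (hτ' _ h) (hτ' _ h')
  have hgd : ∀ (θ : NerveSet U) (τ' : {s : Finset (Fin N) // s.Nonempty} → unitInterval) (x : M),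
      (∀ σ, τ' σ ≠ 0 → τ θ σ ≠ 0) → (∀ j, θ.1 j ≠ 0 → x ∈ U j) → GoodPt V l τ' x := by
    intro θ τ' x hτ' hx σ _ h
    have hg := tau_pos hdpos (hτ' σ h)
    simp only [V, mem_iInter]
    intro j hj
    apply hx
    have := (hg j hj).1
    intro h0
    rw [h0] at this
    linarith
  have hpt : ∀ θ : NerveSet U, ∃ x, ∀ j, θ.1 j ≠ 0 → x ∈ U j := by
    intro θ
    obtain ⟨x, hx⟩ := θ.2.2.2
    simp only [mem_ofPred_eq, mem_iInter] at hx
    exact ⟨x, hx⟩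
  choose b hb using hpt
  -- two close points have a common fully active simplex
  have hreset : ∀ θ η : NerveSet U, dist θ η ≤ d / 4 → ∃ σ ∈ l, τ θ σ = 1 ∧ τ η σ = 1 := by
    intro θ η h
    obtain ⟨σ, hσ, hg⟩ := exists_gap θ.1 (fun i => (θ.2.1 i).1) θ.2.2.1
    rw [← hd] at hg
    refine ⟨⟨σ, hσ⟩, hl _, tau_one ?_, tau_one ?_⟩
    · have := gapSet_near (r := d / 4) hg (by rw [dist_self]; positivity)
      convert this using 1
      ring_nf
    · have := gapSet_near hg h
      convert this using 1
      ring_nf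
  obtain ⟨R, hR0, hR⟩ := run_reset Φ l
  obtain ⟨Q, hQ0, hQ⟩ := run_lip Φ l
  let ζ : NerveSet U → M := fun θ => runFlow Φ l (τ θ) (b θ)
  have hindep : ∀ (θ : NerveSet U) (x : M), (∀ j, θ.1 j ≠ 0 → x ∈ U j) →
      runFlow Φ l (τ θ) x = ζ θ := by
    intro θ x hx
    have := hR (τ θ) (τ θ) x (b θ) 0 le_rfl (hadm θ _ fun _ h => h) (hadm θ _ fun _ h => h)
      (hgd θ _ x (fun _ h => h) hx) (hgd θ _ _ (fun _ h => h) (hb θ)) (by simp)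
      (hreset θ θ (by rw [dist_self]; positivity))
    rw [mul_zero] at this
    exact dist_le_zero.1 this
  have hζ : ∃ Z : ℝ, 0 ≤ Z ∧ ∀ θ η, dist (ζ θ) (ζ η) ≤ Z * dist θ η := by
    refine ⟨R * (8 / d) + Metric.diam (univ : Set M) * (4 / d), ?_, ?_⟩
    · have := Metric.diam_nonneg (s := (univ : Set M))
      positivity
    intro θ η
    have hdm := Metric.diam_nonneg (s := (univ : Set M))
    have hdd : 0 ≤ dist θ η := dist_nonneg
    rw [add_mul]
    have t1 : 0 ≤ R * (8 / d) * dist θ η := by positivity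
    have t2 : 0 ≤ Metric.diam (univ : Set M) * (4 / d) * dist θ η := by positivity
    rcases le_total (dist θ η) (d / 4) with h | h
    · have := hR (τ θ) (τ η) (b θ) (b η) ((8 / d) * dist θ η) (by positivity)
        (hadm θ _ fun _ h => h) (hadm η _ fun _ h => h)
        (hgd θ _ _ (fun _ h => h) (hb θ)) (hgd η _ _ (fun _ h => h) (hb η))
        (fun σ => tau_lip hdpos θ.1 η.1 σ) (hreset θ η h)
      show dist (runFlow Φ l (τ θ) (b θ)) (runFlow Φ l (τ η) (b η)) ≤ _
      linarith
    · have h1 : dist (ζ θ) (ζ η) ≤ Metric.diam (univ : Set M) :=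
        Metric.dist_le_diam_of_mem isCompact_univ.isBounded (mem_univ _) (mem_univ _)
      have h2 : 1 ≤ (4 / d) * dist θ η := by
        have : (4 / d) * (d / 4) ≤ (4 / d) * dist θ η :=
          mul_le_mul_of_nonneg_left h (by positivity)
        have e : (4 / d) * (d / 4) = 1 := by field_simp
        linarith
      have h3 := mul_le_mul_of_nonneg_left h2 hdm
      linarith
  obtain ⟨Z, hZ0, hZ⟩ := hζ
  refine ⟨⟨_, LipschitzWith.of_dist_le' hL⟩, ζ, _, LipschitzWith.of_dist_le' hZ, ?_, ?_⟩
  · -- scale all the times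
    let T : M × unitInterval → {s : Finset (Fin N) // s.Nonempty} → unitInterval :=
      fun q σ => unitInterval.symm q.2 * τ (Θ q.1) σ
    have hT : ∀ q σ, T q σ ≠ 0 → τ (Θ q.1) σ ≠ 0 := by
      intro q σ h h0
      apply h
      simp [T, h0]
    refine ⟨fun q => runFlow Φ l (T q) q.1, _,
      LipschitzWith.of_dist_le' (K := Q * (1 + (1 + (8 / d) * L))) ?_, ?_, ?_⟩
    · intro q r
      have hD : 0 ≤ dist q r := dist_nonneg
      have d1 : dist q.1 r.1 ≤ dist q r := le_max_left _ _
      have d2 : dist q.2 r.2 ≤ dist q r := le_max_right _ _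
      refine (hQ (T q) (T r) q.1 r.1 ((1 + (8 / d) * L) * dist q r) (by positivity)
        (hadm _ _ (hT q)) (hadm _ _ (hT r)) (hgd _ _ _ (hT q) (hΘU q.1))
        (hgd _ _ _ (hT r) (hΘU r.1)) ?_).trans ?_
      · intro σ
        have e1 : |(unitInterval.symm q.2 : ℝ) - unitInterval.symm r.2| ≤ dist q r := by
          rw [unitInterval.coe_symm_eq, unitInterval.coe_symm_eq,
            show (1 - (q.2 : ℝ) - (1 - r.2)) = - ((q.2 : ℝ) - r.2) by ring, abs_neg]
          exact d2
        have e2 : |(τ (Θ q.1) σ : ℝ) - τ (Θ r.1) σ| ≤ (8 / d) * L * dist q r := by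
          refine (tau_lip hdpos (Θ q.1).1 (Θ r.1).1 σ).trans ?_
          rw [mul_assoc]
          refine mul_le_mul_of_nonneg_left ?_ (by positivity)
          exact (hL q.1 r.1).trans (mul_le_mul_of_nonneg_left d1 hL0)
        have := mul_lip e1 e2 (by rw [abs_of_nonneg (unitInterval.symm r.2).2.1]
                                  exact (unitInterval.symm r.2).2.2)
          (by rw [abs_of_nonneg (τ (Θ q.1) σ).2.1]; exact (τ (Θ q.1) σ).2.2)
        rw [Subtype.dist_eq, Real.dist_eq]
        refine this.trans (le_of_eq ?_)
        ring
      · rw [mul_assoc]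
        refine mul_le_mul_of_nonneg_left ?_ hQ0
        linarith
    · intro x
      have : T (x, 0) = τ (Θ x) := by
        funext σ
        simp [T]
      show runFlow Φ l (T (x, 0)) x = ζ (Θ x)
      rw [this]
      exact hindep (Θ x) x (hΘU x)
    · intro x
      have : T (x, 1) = fun _ => 0 := by
        funext σ
        simp [T]
      show runFlow Φ l (T (x, 1)) x = x
      rw [this]
      exact run_zero Φ l x
  · obtain ⟨ψ, K, hK, h0, h1, hψ, hψs⟩ := exists_psi U (ε := d / 4) (by positivity)
    have hin : ∀ (θ : NerveSet U) j, ψ θ j ≠ 0 → ∀ σ, τ θ σ ≠ 0 → j ∈ σ.1 := by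
      intro θ j hj σ hσ
      by_contra hcon
      obtain ⟨i, hi⟩ := σ.2
      have e1 := (tau_pos hdpos hσ i hi).2 j hcon
      have e2 := hψs θ j hj i
      linarith
    have hs : ∀ (θ : NerveSet U) j, ψ θ j ≠ 0 → θ.1 j ≠ 0 := by
      intro θ j hj hz
      obtain ⟨σ, -, hσ, -⟩ := hreset θ θ (by rw [dist_self]; positivity)
      have hσ0 : τ θ σ ≠ 0 := by rw [hσ]; exact one_ne_zero
      have := (tau_pos hdpos hσ0 j (hin θ j hj σ hσ0)).1
      rw [hz] at this
      linarith
    refine two_step U (Θ ∘ ζ) (L := L * Z) (mul_nonneg hL0 hZ0) hK ?_ ψ h0 h1 hψ hs ?_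
    · intro θ η
      refine (hL _ _).trans ?_
      rw [mul_assoc]
      exact mul_le_mul_of_nonneg_left (hZ θ η) hL0
    · intro θ
      refine ⟨ζ θ, ?_, hΘU (ζ θ)⟩
      intro j hj
      refine run_mem Φ (U j) (τ θ) ?_ l (b θ) (hadm θ _ fun _ h => h)
        (hgd θ _ _ (fun _ h => h) (hb θ)) (hb θ j (hs θ j hj))
      intro σ hσ
      exact biInter_subset_of_mem (hin θ j hj σ hσ)
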